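/- Every ordered pair of orthogonal Latin squares of order 5 is ∼'-equivalent to (C_1, C_4) or to (C_1, C_3) on ZMod 5; since the pair (C_1, C_4) is orthogonal, the set of ∼'-equivalence classes of ordered pairs of orthogonal Latin squares of order 5 has at least one and at most two elements. -/

import Mathlib

/-- A Latin square of order `k` (rows, columns and symbols drawn from the same
`k`-element type, e.g. `Fin k` or `ZMod k`): every row and every column is a
bijection. -/
def IsLatinSquare {α : Type*} (L : α → α → α) : Prop :=
  (∀ i, Function.Bijective fun j => L i j) ∧ (∀ j, Function.Bijective fun i => L i j)

/-- Two squares are orthogonal if `(i, j) ↦ (L i j, L' i j)` is a bijection. -/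
def IsOrthogonal {α : Type*} (L L' : α → α → α) : Prop :=
  Function.Bijective fun p : α × α => (L p.1 p.2, L' p.1 p.2)

/-- The relation `∼` on Latin squares: `L ∼ L'` iff `L'` is obtained from `L` by
permuting rows, permuting columns and relabelling symbols. -/
def LatinEquiv {α : Type*} (L L' : α → α → α) : Prop :=
  ∃ a b c : Equiv.Perm α, ∀ i j, L' i j = c (L (a i) (b j))

/-- One elementary move on an ordered pair of squares: simultaneous row
permutation, simultaneous column permutation, relabelling the symbols of either
square, transposing either square, or interchanging the squares. -/
inductive PairStep {α : Type*} :
    ((α → α → α) × (α → α → α)) → ((α → α → α) × (α → α → α)) → Prop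
  | rows (P : (α → α → α) × (α → α → α)) (a : Equiv.Perm α) :
      PairStep P (fun i j => P.1 (a i) j, fun i j => P.2 (a i) j)
  | cols (P : (α → α → α) × (α → α → α)) (b : Equiv.Perm α) :
      PairStep P (fun i j => P.1 i (b j), fun i j => P.2 i (b j))
  | relabelFst (P : (α → α → α) × (α → α → α)) (c : Equiv.Perm α) :
      PairStep P (fun i j => c (P.1 i j), P.2)
  | relabelSnd (P : (α → α → α) × (α → α → α)) (c : Equiv.Perm α) :
      PairStep P (P.1, fun i j => c (P.2 i j))
  | transposeFst (P : (α → α → α) × (α → α → α)) :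
      PairStep P (fun i j => P.1 j i, P.2)
  | transposeSnd (P : (α → α → α) × (α → α → α)) :
      PairStep P (P.1, fun i j => P.2 j i)
  | swap (P : (α → α → α) × (α → α → α)) :
      PairStep P (P.2, P.1)

/-- The equivalence relation `∼'` on ordered pairs of squares, generated by the
elementary moves `PairStep`. -/
def PairEquiv {α : Type*} (P Q : (α → α → α) × (α → α → α)) : Prop :=
  Relation.EqvGen PairStep P Q

/-- The cyclic square `C_c` on `ZMod k`: `C_c i j = j + c * i`. -/
def Csq (k : ℕ) (c : ZMod k) : ZMod k → ZMod k → ZMod k :=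
  fun i j => j + c * i

/-- Ordered pairs of orthogonal Latin squares of order `k`. -/
def OLSPair (k : ℕ) :=
  {P : (Fin k → Fin k → Fin k) × (Fin k → Fin k → Fin k) //
    IsLatinSquare P.1 ∧ IsLatinSquare P.2 ∧ IsOrthogonal P.1 P.2}

/-- `∼'` as a setoid on ordered pairs of orthogonal Latin squares. -/
def olsSetoid (k : ℕ) : Setoid (OLSPair k) where
  r P Q := PairEquiv P.val Q.val
  iseqv := ⟨fun _ => Relation.EqvGen.refl _,
            fun h => Relation.EqvGen.symm _ _ h,
            fun h h' => Relation.EqvGen.trans _ _ _ h h'⟩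

/-- A transversal of a square: a permutation `f` of the columns such that
`i ↦ L i (f i)` is injective (hits every symbol exactly once). -/
def IsTransversal {α : Type*} (L : α → α → α) (f : Equiv.Perm α) : Prop :=
  Function.Injective fun i => L i (f i)

/-- `L` admits `k` pairwise disjoint transversals. -/
def HasDisjointTransversals {k : ℕ} (L : Fin k → Fin k → Fin k) : Prop :=
  ∃ T : Fin k → Equiv.Perm (Fin k), (∀ m, IsTransversal L (T m)) ∧
    ∀ m m', m ≠ m' → ∀ i, T m i ≠ T m' i

/-- `G'_k`: Latin squares whose successive-row permutations `σ_{i,i+1}` all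
equal one common permutation which is a single `k`-cycle. -/
def GPrime (k : ℕ) : Set (Fin k → Fin k → Fin k) :=
  {L | IsLatinSquare L ∧ ∃ σ : Equiv.Perm (Fin k), σ.IsCycle ∧ σ.support.card = k ∧
    ∀ (i : ℕ) (h : i + 1 < k) (p : Fin k),
      σ (L ⟨i, Nat.lt_of_succ_lt h⟩ p) = L ⟨i + 1, h⟩ p}

/-- `G_k`: Latin squares `∼`-equivalent to an element of `G'_k`. -/
def GSet (k : ℕ) : Set (Fin k → Fin k → Fin k) :=
  {L | ∃ H ∈ GPrime k, LatinEquiv L H}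

/-- The cyclic square `C_1`, written on `Fin k` via the identification of
`ZMod k` with `Fin k`: `C_1 i j = j + i (mod k)`. -/
def C1fin (k : ℕ) : Fin k → Fin k → Fin k :=
  fun i j => ⟨(j.1 + i.1) % k, Nat.mod_lt _ i.pos⟩

/-!
A transversal of a square of order five meets every intercalate, while a mate provides five disjoint
transversals and an intercalate has only four cells. Hence two orthogonal squares of order five have
no intercalates. Any two rows, and any two columns, then differ by a permutation without fixed
points or 2-cycles, that is, by a 5-cycle, which forces the square to be isotopic to `C_1`. The
transversals of `C_1` are affine, by comparing the power sums of a transversal `f` and of `f x + x`.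
Those of a mate are disjoint, so they have the same slope and the mate is some `C_m` with
`m ≠ 0, 1`. Finally, transposition exchanges `C_2` and `C_3`.
-/

section Isotopy

variable {α : Type*} {L L' : α → α → α}

/-- The isotope of a square: rows permuted by `a`, columns by `b`, symbols relabelled by `c`. -/
def isotope (a b c : Equiv.Perm α) (L : α → α → α) : α → α → α :=
  fun i j => c (L (a i) (b j))

theorem IsLatinSquare.isotope (hL : IsLatinSquare L) (a b c : Equiv.Perm α) :
    IsLatinSquare (isotope a b c L) :=
  ⟨fun i => c.bijective.comp ((hL.1 (a i)).comp b.bijective),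
    fun j => c.bijective.comp ((hL.2 (b j)).comp a.bijective)⟩

theorem IsOrthogonal.isotope (h : IsOrthogonal L L') (a b c c' : Equiv.Perm α) :
    IsOrthogonal (isotope a b c L) (isotope a b c' L') :=
  (c.prodCongr c').bijective.comp (Function.Bijective.comp h (a.prodCongr b).bijective)

theorem PairEquiv.trans {P Q R : (α → α → α) × (α → α → α)} (hPQ : PairEquiv P Q)
    (hQR : PairEquiv Q R) : PairEquiv P R :=
  Relation.EqvGen.trans _ _ _ hPQ hQR

theorem PairStep.pairEquiv {P Q : (α → α → α) × (α → α → α)} (h : PairStep P Q) :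
    PairEquiv P Q :=
  Relation.EqvGen.rel _ _ h

theorem pairEquiv_isotope (L L' : α → α → α) (a b c c' : Equiv.Perm α) :
    PairEquiv (L, L') (isotope a b c L, isotope a b c' L') :=
  (PairStep.rows _ a).pairEquiv.trans <| (PairStep.cols _ b).pairEquiv.trans <|
    (PairStep.relabelFst _ c).pairEquiv.trans (PairStep.relabelSnd _ c').pairEquiv

end Isotopy

namespace IsLatinSquare

variable {α : Type*} {L L' : α → α → α}

theorem swap (hL : IsLatinSquare L) : IsLatinSquare (Function.swap L) :=
  ⟨hL.2, hL.1⟩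

/-- Row `i` of a Latin square, as a permutation taking columns to symbols. -/
noncomputable def row (hL : IsLatinSquare L) (i : α) : Equiv.Perm α :=
  Equiv.ofBijective (L i) (hL.1 i)

theorem apply_row_symm (hL : IsLatinSquare L) (i s : α) : L i ((hL.row i).symm s) = s :=
  (hL.row i).apply_symm_apply s

/-- The permutation `σ_{i,i'}` of the symbols that takes row `i` of a Latin square to
row `i'`. -/
noncomputable def rowPerm (hL : IsLatinSquare L) (i i' : α) : Equiv.Perm α :=
  (hL.row i).symm.trans (hL.row i')

theorem rowPerm_apply (hL : IsLatinSquare L) (i i' j : α) :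
    hL.rowPerm i i' (L i j) = L i' j :=
  congrArg (L i') ((hL.row i).symm_apply_apply j)

theorem eq_of_apply_left_eq (hL : IsLatinSquare L) {i i' s : α}
    (h : (hL.row i).symm s = (hL.row i').symm s) : i = i' :=
  (hL.2 _).1 <| (hL.apply_row_symm i s).trans <| (h ▸ hL.apply_row_symm i' s).symm

/-- The cells of a Latin square that hold the symbol `s`, as a permutation taking rows to
columns. -/
noncomputable def symbolPerm [Finite α] (hL : IsLatinSquare L) (s : α) : Equiv.Perm α :=
  Equiv.ofBijective (fun i => (hL.row i).symm s) <|
    Function.Injective.bijective_of_finite fun _ _ => hL.eq_of_apply_left_eq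

theorem apply_symbolPerm [Finite α] (hL : IsLatinSquare L) (s i : α) :
    L i (hL.symbolPerm s i) = s :=
  hL.apply_row_symm i s

theorem isTransversal_symbolPerm [Finite α] (hL' : IsLatinSquare L') (h : IsOrthogonal L L')
    (s : α) : IsTransversal L (hL'.symbolPerm s) := fun i i' hii' =>
  congrArg Prod.fst <| @h.1 (i, hL'.symbolPerm s i) (i', hL'.symbolPerm s i')
    (Prod.ext hii' (by simp only [apply_symbolPerm]))

end IsLatinSquare

section Subsquare

open Finset

variable {α : Type*} {L L' : α → α → α} {R C S : Finset α}

/-- The rows `R` and columns `C` of `L` cut out a Latin subsquare with symbol set `S`. -/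
structure IsSubsquare (L : α → α → α) (R C S : Finset α) : Prop where
  card_rows : #R = #S
  card_cols : #C = #S
  mapsTo : ∀ i ∈ R, ∀ j ∈ C, L i j ∈ S

theorem IsSubsquare.swap (h : IsSubsquare L R C S) : IsSubsquare (Function.swap L) C R S :=
  ⟨h.card_cols, h.card_rows, fun j hj i hi => h.mapsTo i hi j hj⟩

theorem IsSubsquare.mem_cols (h : IsSubsquare L R C S) (hL : IsLatinSquare L) {i j : α}
    (hi : i ∈ R) (hij : L i j ∈ S) : j ∈ C := by
  have hmaps : Set.MapsTo (L i) C S := fun j hj => h.mapsTo i hi j hj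
  have hsurj := Finset.surjOn_of_injOn_of_card_le (L i) hmaps (hL.1 i).1.injOn h.card_cols.ge
  obtain ⟨j', hj', hjj'⟩ := hsurj hij
  exact (hL.1 i).1 hjj' ▸ hj'

theorem IsSubsquare.mem_rows (h : IsSubsquare L R C S) (hL : IsLatinSquare L) {i j : α}
    (hj : j ∈ C) (hij : L i j ∈ S) : i ∈ R :=
  h.swap.mem_cols hL.swap hj hij

theorem card_filter_mem_perm [Fintype α] [DecidableEq α] (f : Equiv.Perm α) (C : Finset α) :
    #{i | f i ∈ C} = #C :=
  card_equiv f fun _ => by simp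

/-- A cell outside the subsquare lies in at most one of: the rows `R`, the columns `C`, the cells
with symbol in `S`. -/
theorem IsSubsquare.three_mul_card_le [Fintype α] [DecidableEq α] (h : IsSubsquare L R C S)
    (hL : IsLatinSquare L) {f : Equiv.Perm α} (hf : IsTransversal L f) :
    3 * #S ≤ Fintype.card α + 2 * #{i ∈ R | f i ∈ C} := by
  have hsymbols : #{i | L i (f i) ∈ S} = #S :=
    card_filter_mem_perm (Equiv.ofBijective _ hf.bijective_of_finite) S
  have hcell (i : α) : (if i ∈ R then 1 else 0) + (if f i ∈ C then 1 else 0) +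
      (if L i (f i) ∈ S then 1 else 0) ≤ 1 + 2 * if i ∈ R ∧ f i ∈ C then 1 else 0 := by
    have h₁ := h.mapsTo i (j := f i)
    have h₂ := h.mem_cols hL (i := i) (j := f i)
    have h₃ := h.mem_rows hL (i := i) (j := f i)
    split_ifs <;> grind
  calc 3 * #S = #{i | i ∈ R} + #{i | f i ∈ C} + #{i | L i (f i) ∈ S} := by
        rw [filter_univ_mem, card_filter_mem_perm, hsymbols, h.card_rows, h.card_cols]; ring
    _ ≤ ∑ i : α, (1 + 2 * if i ∈ R ∧ f i ∈ C then 1 else 0) := by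
        simp only [card_filter, ← sum_add_distrib]
        exact sum_le_sum fun i _ => hcell i
    _ = Fintype.card α + 2 * #{i ∈ R | f i ∈ C} := by
        rw [sum_add_distrib, ← mul_sum, ← card_filter, ← filter_filter, filter_univ_mem]
        simp

theorem IsLatinSquare.sum_card_symbolPerm [Fintype α] [DecidableEq α] (hL : IsLatinSquare L)
    (R C : Finset α) : ∑ s, #{i ∈ R | hL.symbolPerm s i ∈ C} = #R * #C := by
  simp only [card_filter]
  rw [sum_comm, ← smul_eq_mul, ← sum_const]
  refine sum_congr rfl fun i _ => ?_
  rw [← card_filter]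
  exact card_filter_mem_perm (hL.row i).symm C

/-- Mann's theorem: every transversal meets the subsquare in at least `t` cells, so `4 * t + 1`
disjoint transversals would need more than its `4 * t ^ 2` cells. -/
theorem IsSubsquare.not_isOrthogonal [Fintype α] (h : IsSubsquare L R C S)
    (hL : IsLatinSquare L) (hL' : IsLatinSquare L') {t : ℕ} (ht : 0 < t)
    (hα : Fintype.card α = 4 * t + 1) (hS : #S = 2 * t) : ¬ IsOrthogonal L L' := by
  classical
  intro horth
  have hmeet (s : α) : t ≤ #{i ∈ R | hL'.symbolPerm s i ∈ C} := by
    have := h.three_mul_card_le hL (hL'.isTransversal_symbolPerm horth s)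
    lia
  have htotal : (4 * t + 1) * t ≤ 2 * t * (2 * t) := by
    calc (4 * t + 1) * t = ∑ _s : α, t := by simp [hα]
      _ ≤ ∑ s, #{i ∈ R | hL'.symbolPerm s i ∈ C} := sum_le_sum fun s _ => hmeet s
      _ = 2 * t * (2 * t) := by
        rw [hL'.sum_card_symbolPerm, h.card_rows, h.card_cols, hS]
  nlinarith

end Subsquare

section Intercalate

variable {α : Type*} {L L' : α → α → α}

/-- An intercalate is a Latin subsquare of order two. -/
def HasIntercalate (L : α → α → α) : Prop :=
  ∃ i i' j j', i ≠ i' ∧ j ≠ j' ∧ L i j = L i' j' ∧ L i j' = L i' j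

theorem HasIntercalate.of_swap (h : HasIntercalate (Function.swap L)) : HasIntercalate L := by
  obtain ⟨j, j', i, i', hj, hi, hdiag, hanti⟩ := h
  exact ⟨i, i', j, j', hi, hj, hdiag, hanti.symm⟩

theorem HasIntercalate.of_isotope {a b c : Equiv.Perm α} (h : HasIntercalate (isotope a b c L)) :
    HasIntercalate L := by
  obtain ⟨i, i', j, j', hi, hj, hdiag, hanti⟩ := h
  exact ⟨a i, a i', b j, b j', a.injective.ne hi, b.injective.ne hj, c.injective hdiag,
    c.injective hanti⟩

theorem IsLatinSquare.not_hasIntercalate (hL : IsLatinSquare L) (hL' : IsLatinSquare L')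
    (h : IsOrthogonal L L') (hα : Nat.card α = 5) : ¬ HasIntercalate L := by
  classical
  have : Finite α := Nat.finite_of_card_ne_zero (by lia)
  have := Fintype.ofFinite α
  rintro ⟨i, i', j, j', hi, hj, hdiag, hanti⟩
  have hsymbols : ({L i j, L i j'} : Finset α).card = 2 :=
    Finset.card_pair ((hL.1 i).1.ne hj)
  have hsub : IsSubsquare L {i, i'} {j, j'} {L i j, L i j'} :=
    ⟨by rw [hsymbols, Finset.card_pair hi], by rw [hsymbols, Finset.card_pair hj], by grind⟩
  exact hsub.not_isOrthogonal hL hL' one_pos (Nat.card_eq_fintype_card.symm.trans hα) hsymbols h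

theorem IsLatinSquare.rowPerm_rowPerm_ne (hL : IsLatinSquare L) (hint : ¬ HasIntercalate L)
    {i i' : α} (hi : i ≠ i') (s : α) : hL.rowPerm i i' (hL.rowPerm i i' s) ≠ s := by
  obtain ⟨j, rfl⟩ := (hL.1 i).2 s
  obtain ⟨j', hj'⟩ := (hL.1 i).2 (L i' j)
  rw [hL.rowPerm_apply, ← hj', hL.rowPerm_apply]
  intro hdiag
  refine hint ⟨i, i', j, j', hi, ?_, hdiag.symm, hj'⟩
  rintro rfl
  exact hi ((hL.2 j).1 hj')

end Intercalate

section Cycles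

open Equiv.Perm

variable {α : Type*} [Fintype α]

theorem two_lt_of_mem_cycleType [DecidableEq α] {σ : Equiv.Perm α} (hσ : ∀ x, σ (σ x) ≠ x) {n : ℕ}
    (hn : n ∈ σ.cycleType) : 2 < n := by
  refine (two_le_of_mem_cycleType hn).lt_of_ne ?_
  rintro rfl
  obtain ⟨c, τ, rfl, hdisj, -, hc⟩ := mem_cycleType_iff.1 hn
  obtain ⟨x, y, hxy, rfl⟩ := card_support_eq_two.1 hc
  have hx : τ x = x := (hdisj x).resolve_left (by simpa using hxy.symm)
  have hy : τ y = y := (hdisj y).resolve_left (by simpa using hxy)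
  exact hσ x (by simp [hx, hy])

theorem isCycle_of_apply_apply_ne [Nonempty α] (hα : Fintype.card α < 6) {σ : Equiv.Perm α}
    (hσ : ∀ x, σ (σ x) ≠ x) : σ.IsCycle := by
  classical
  have hlong : σ.cycleType.card • 3 ≤ σ.cycleType.sum :=
    Multiset.card_nsmul_le_sum fun n hn => two_lt_of_mem_cycleType hσ hn
  have hsum : σ.cycleType.sum < 6 := σ.sum_cycleType_le.trans_lt hα
  have hpos : 0 < σ.cycleType.card := by
    inhabit α
    refine Multiset.card_pos.2 (cycleType_eq_zero.not.2 ?_)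
    rintro rfl
    exact hσ default rfl
  rw [← card_cycleType_eq_one]
  lia

end Cycles

section CyclicSquare

variable {k : ℕ} {c c' : ZMod k}

theorem isLatinSquare_Csq (hc : IsUnit c) : IsLatinSquare (Csq k c) :=
  ⟨fun i => (Equiv.addRight (c * i)).bijective,
    fun j => (Equiv.addLeft j).bijective.comp hc.unit.mulLeft_bijective⟩

theorem isOrthogonal_Csq (hc : IsUnit (c - c')) : IsOrthogonal (Csq k c) (Csq k c') := by
  obtain ⟨u, hu⟩ := hc
  constructor
  · rintro ⟨i, j⟩ ⟨i', j'⟩ h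
    obtain ⟨h₁, h₂⟩ := Prod.ext_iff.1 h
    have hi : i = i' := u.isUnit.mul_left_cancel <| by
      simp only [Csq] at h₁ h₂
      linear_combination h₁ - h₂ + (i - i') * hu
    subst hi
    exact Prod.ext rfl (add_right_cancel h₁)
  · rintro ⟨x, y⟩
    refine ⟨(↑u⁻¹ * (x - y), x - c * (↑u⁻¹ * (x - y))), Prod.ext ?_ ?_⟩
    · simp [Csq]
    · simp only [Csq]
      linear_combination (↑u⁻¹ * (x - y)) * hu - (x - y) * u.mul_inv

/-- Transposing `C_u` gives `i + u * j = u * (j + u⁻¹ * i)`. -/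
theorem pairEquiv_Csq_inv (L : ZMod k → ZMod k → ZMod k) (u : (ZMod k)ˣ) :
    PairEquiv (L, Csq k u) (L, Csq k ↑u⁻¹) := by
  have htranspose : (fun i j => Csq k u j i) = fun i j => u * Csq k ↑u⁻¹ i j := by
    funext i j
    simp only [Csq]
    linear_combination -i * u.mul_inv
  have hrelabel := (PairStep.relabelSnd (L, fun i j => u * Csq k ↑u⁻¹ i j) u⁻¹.mulLeft).pairEquiv
  simp only [Units.mulLeft_apply, Units.inv_mul_cancel_left] at hrelabel
  refine PairEquiv.trans (PairStep.transposeSnd (L, Csq k u)).pairEquiv ?_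
  simpa only [htranspose] using hrelabel

end CyclicSquare

section NoIntercalate

variable {L : ZMod 5 → ZMod 5 → ZMod 5}

theorem exists_conj_add_one {σ : Equiv.Perm (ZMod 5)} (hσ : ∀ x, σ (σ x) ≠ x) :
    ∃ c : Equiv.Perm (ZMod 5), ∀ x, c (σ x) = c x + 1 := by
  have hfix {τ : Equiv.Perm (ZMod 5)} (hτ : ∀ x, τ (τ x) ≠ x) : τ.support = Finset.univ := by
    refine Finset.eq_univ_of_forall fun x => Equiv.Perm.mem_support.2 fun hx => hτ x ?_
    rw [hx, hx]
  have hadd : ∀ x : ZMod 5, Equiv.addRight 1 (Equiv.addRight 1 x) ≠ x := by decide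
  obtain ⟨c, hc⟩ := isConj_iff.1 <|
    (isCycle_of_apply_apply_ne (by simp) hσ).isConj
      (isCycle_of_apply_apply_ne (by simp) hadd) (by rw [hfix hσ, hfix hadd])
  exact ⟨c, fun x => by simpa using DFunLike.congr_fun hc (c x)⟩

theorem exists_isotope_rows (hL : IsLatinSquare L) (hint : ¬ HasIntercalate L) :
    ∃ b c : Equiv.Perm (ZMod 5),
      ∀ j, isotope 1 b c L 0 j = j ∧ isotope 1 b c L 1 j = j + 1 := by
  obtain ⟨c, hc⟩ := exists_conj_add_one (hL.rowPerm_rowPerm_ne hint (by decide : (0 : ZMod 5) ≠ 1))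
  refine ⟨c.symm.trans (hL.row 0).symm, c, fun j => ?_⟩
  have hrow : c (L 0 ((hL.row 0).symm (c.symm j))) = j := by
    rw [hL.apply_row_symm, c.apply_symm_apply]
  refine ⟨hrow, ?_⟩
  calc c (L 1 ((hL.row 0).symm (c.symm j)))
      = c (L 0 ((hL.row 0).symm (c.symm j))) + 1 := by rw [← hc, hL.rowPerm_apply]
    _ = j + 1 := by rw [hrow]

/-- There are just two `5`-cycles of the form `(j, j + 1, j + 2, x, y)`. -/
theorem add_one_or_twist : ∀ (j : ZMod 5) (π : Equiv.Perm (ZMod 5)), π j = j + 1 →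
    π (j + 1) = j + 1 + 1 → (∀ x, π (π x) ≠ x) → (∀ x, π x = x + 1) ∨
      (π (j + 2) = j + 1 + 3 ∧ π (j + 3) = j + 1 + 4 ∧ π (j + 4) = j + 1 + 2) := by
  decide +kernel

/-- The step from column `j` to column `j + 1` is twisted if it moves the offset `L i j - j` along
`2 → 3 → 4 → 2`. The right-hand sides are written so that the offset in column `j + 1` can be read
off. -/
def IsTwisted (L : ZMod 5 → ZMod 5 → ZMod 5) (j : ZMod 5) : Prop :=
  ∀ i, (L i j = j + 2 → L i (j + 1) = j + 1 + 3) ∧ (L i j = j + 3 → L i (j + 1) = j + 1 + 4) ∧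
    (L i j = j + 4 → L i (j + 1) = j + 1 + 2)

theorem add_one_or_isTwisted (hL : IsLatinSquare L) (hint : ¬ HasIntercalate L)
    (h₀ : ∀ j, L 0 j = j) (h₁ : ∀ j, L 1 j = j + 1) (j : ZMod 5) :
    (∀ i, L i (j + 1) = L i j + 1) ∨ IsTwisted L j := by
  set π := hL.swap.rowPerm j (j + 1)
  have hπ (i : ZMod 5) : π (L i j) = L i (j + 1) := hL.swap.rowPerm_apply j (j + 1) i
  have hπ₀ : π j = j + 1 := by simpa only [h₀] using hπ 0
  have hπ₁ : π (j + 1) = j + 1 + 1 := by simpa only [h₁] using hπ 1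
  have hne : ∀ j : ZMod 5, j ≠ j + 1 := by decide
  have hππ : ∀ s, π (π s) ≠ s :=
    hL.swap.rowPerm_rowPerm_ne (mt HasIntercalate.of_swap hint) (hne j)
  refine (add_one_or_twist j π hπ₀ hπ₁ hππ).imp (fun h i => by rw [← hπ, h]) fun h i => ?_
  rw [← hπ]
  exact ⟨fun hi => hi ▸ h.1, fun hi => hi ▸ h.2.1, fun hi => hi ▸ h.2.2⟩

theorem IsTwisted.add_one {j : ZMod 5} (h : IsTwisted L j) (hL : IsLatinSquare L)
    (hstep : (∀ i, L i (j + 1 + 1) = L i (j + 1) + 1) ∨ IsTwisted L (j + 1)) :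
    IsTwisted L (j + 1) := by
  refine hstep.resolve_left fun hsucc => ?_
  obtain ⟨i, hi : L i j = j + 4⟩ := (hL.2 j).2 (j + 4)
  have hrepeat : L i (j + 1 + 1) = L i j := by
    rw [hsucc, (h i).2.2 hi, hi]
    ring
  have htwo : ∀ j : ZMod 5, j + 1 + 1 ≠ j := by decide
  exact htwo j ((hL.1 i).1 hrepeat)

/-- After five twisted steps the offsets would not be back at their initial values, because `3` does
not divide `5`. -/
theorem apply_add_one_of_rows (hL : IsLatinSquare L) (hint : ¬ HasIntercalate L)
    (h₀ : ∀ j, L 0 j = j) (h₁ : ∀ j, L 1 j = j + 1) (i j : ZMod 5) :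
    L i (j + 1) = L i j + 1 := by
  have hstep := add_one_or_isTwisted hL hint h₀ h₁
  refine (hstep j).elim (fun h => h i) fun htwist => False.elim ?_
  have htwist₁ := htwist.add_one hL (hstep _)
  have htwist₂ := htwist₁.add_one hL (hstep _)
  have htwist₃ := htwist₂.add_one hL (hstep _)
  have htwist₄ := htwist₃.add_one hL (hstep _)
  obtain ⟨i, hi : L i j = j + 2⟩ := (hL.2 j).2 (j + 2)
  have hwrap : L i (j + 1 + 1 + 1 + 1 + 1) = j + 1 + 1 + 1 + 1 + 1 + 4 :=
    (htwist₄ i).2.1 <| (htwist₃ i).1 <| (htwist₂ i).2.2 <| (htwist₁ i).2.1 <| (htwist i).1 hi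
  have hfive : ∀ j : ZMod 5, j + 1 + 1 + 1 + 1 + 1 = j := by decide
  rw [hfive, hi] at hwrap
  exact absurd (add_left_cancel hwrap) (by decide)

theorem latinEquiv_Csq_one (hL : IsLatinSquare L) (hint : ¬ HasIntercalate L) :
    LatinEquiv L (Csq 5 1) := by
  obtain ⟨b, c, hrows⟩ := exists_isotope_rows hL hint
  have hM := hL.isotope 1 b c
  have hsucc := apply_add_one_of_rows hM (mt HasIntercalate.of_isotope hint)
    (fun j => (hrows j).1) fun j => (hrows j).2
  have hcol (i j : ZMod 5) : isotope 1 b c L i j = j + isotope 1 b c L i 0 := by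
    obtain ⟨n, rfl⟩ := ZMod.natCast_zmod_surjective j
    induction n with
    | zero => simp
    | succ n hn => rw [Nat.cast_succ, hsucc, hn, add_right_comm]
  refine ⟨(hM.swap.row 0).symm, b, c, fun i j => ?_⟩
  calc Csq 5 1 i j = j + isotope 1 b c L ((hM.swap.row 0).symm i) 0 := by
        rw [Csq, one_mul]
        exact congrArg (j + ·) (hM.swap.apply_row_symm 0 i).symm
    _ = c (L ((hM.swap.row 0).symm i) (b j)) := (hcol _ _).symm

end NoIntercalate

section CyclicMate

-- Local, since it changes the instances with which numerals in `ZMod 5` are elaborated.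
local instance fact_prime_five : Fact (Nat.Prime 5) :=
  ⟨Nat.prime_five⟩

theorem sum_zmod_five (F : ZMod 5 → ZMod 5) : ∑ x, F x = F 0 + F 1 + F 2 + F 3 + F 4 :=
  Fin.sum_univ_five F

theorem sum_mul_eq_zero_of_injective {f : ZMod 5 → ZMod 5} (hf : Function.Injective f)
    (hf' : Function.Injective fun x => f x + x) : ∑ x, x * f x = 0 := by
  have hid : ∑ x : ZMod 5, x ^ 2 = 0 := rfl
  have hsq : ∑ x, f x ^ 2 = 0 := (hf.bijective_of_finite.sum_comp (· ^ 2)).trans hid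
  have hsq' : ∑ x, (f x + x) ^ 2 = 0 := (hf'.bijective_of_finite.sum_comp (· ^ 2)).trans hid
  have hexpand : ∑ x, (f x + x) ^ 2 = ∑ x, f x ^ 2 + 2 * ∑ x, x * f x + ∑ x : ZMod 5, x ^ 2 := by
    rw [Finset.mul_sum, ← Finset.sum_add_distrib, ← Finset.sum_add_distrib]
    exact Finset.sum_congr rfl fun x _ => by ring
  rw [hsq, hsq', hid, zero_add, add_zero] at hexpand
  exact (mul_eq_zero.1 hexpand.symm).resolve_left (by decide)

theorem eq_zero_of_sums_eq_zero {g : ZMod 5 → ZMod 5} (h₀ : g 0 = 0) (h₁ : g 1 = 0)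
    (hsum : ∑ x, g x = 0) (hmul : ∑ x, x * g x = 0) (hsq : ∑ x, g x ^ 2 = 0) (x : ZMod 5) :
    g x = 0 := by
  have hfive : (5 : ZMod 5) = 0 := rfl
  simp only [sum_zmod_five, h₀, h₁] at hsum hmul hsq
  have h₃ : g 3 = -2 * g 4 := by linear_combination hmul - 2 * hsum
  have h₂ : g 2 = g 4 := by linear_combination hsum - h₃
  have h₄ : g 4 = 0 := by
    rw [h₂, h₃] at hsq
    exact pow_eq_zero_iff two_ne_zero |>.1 (by linear_combination hsq - g 4 ^ 2 * hfive)
  rw [h₄, mul_zero] at h₃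
  rw [h₄] at h₂
  fin_cases x <;> assumption

/-- The function `g` subtracts from `f` the affine map that agrees with it at `0` and `1`. The sums
of `g x`, `x * g x` and `g x ^ 2` inherit their vanishing from `f`. -/
theorem eq_affine_of_injective {f : ZMod 5 → ZMod 5} (hf : Function.Injective f)
    (hf' : Function.Injective fun x => f x + x) (x : ZMod 5) :
    f x = f 0 + (f 1 - f 0) * x := by
  have hfive : (5 : ZMod 5) = 0 := rfl
  have hsum : ∑ x, f x = 0 := (hf.bijective_of_finite.sum_comp id).trans rfl
  have hsq : ∑ x, f x ^ 2 = 0 := (hf.bijective_of_finite.sum_comp (· ^ 2)).trans rfl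
  have hmul := sum_mul_eq_zero_of_injective hf hf'
  let g (x : ZMod 5) := f x - (f 0 + (f 1 - f 0) * x)
  refine sub_eq_zero.1 (eq_zero_of_sums_eq_zero (g := g) ?_ ?_ ?_ ?_ ?_ x)
  · ring
  · ring
  all_goals simp only [sum_zmod_five, g] at hsum hmul hsq ⊢
  · linear_combination hsum - (2 * f 1 - f 0) * hfive
  · linear_combination hmul - (6 * f 1 - 4 * f 0) * hfive
  · linear_combination hsq - 2 * f 0 * hsum - 2 * (f 1 - f 0) * hmul +
      (f 0 ^ 2 + 4 * f 0 * (f 1 - f 0) + 6 * (f 1 - f 0) ^ 2) * hfive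

theorem eq_Csq_of_isOrthogonal {L : ZMod 5 → ZMod 5 → ZMod 5} (hL : IsLatinSquare L)
    (h : IsOrthogonal (Csq 5 1) L) (h₀ : ∀ j, L 0 j = j) : ∃ m, L = Csq 5 m := by
  have hline (s : ZMod 5) : ∃ m, ∀ i, L i (s + m * i) = s := by
    set f := hL.symbolPerm s
    have hf₀ : f 0 = s := (h₀ _).symm.trans (hL.apply_symbolPerm s 0)
    have hinj : Function.Injective fun i => f i + i := by
      simpa only [IsTransversal, Csq, one_mul] using hL.isTransversal_symbolPerm h s
    refine ⟨f 1 - f 0, fun i => ?_⟩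
    nth_rw 1 [← hf₀]
    rw [← eq_affine_of_injective f.injective hinj, hL.apply_symbolPerm]
  choose m hm using hline
  have hparallel (s : ZMod 5) : m s = m 0 := by
    by_contra hne
    have hmeet : s + m s * (s / (m 0 - m s)) = 0 + m 0 * (s / (m 0 - m s)) := by
      have := sub_ne_zero.2 (Ne.symm hne)
      field_simp
      ring
    have hs : s = 0 := by rw [← hm s (s / (m 0 - m s)), hmeet, hm]
    exact hne (congrArg m hs)
  refine ⟨-m 0, ?_⟩
  funext i j
  have := hm (j - m 0 * i) i
  rw [hparallel (j - m 0 * i), sub_add_cancel] at this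
  rw [this, Csq]
  ring

theorem pairEquiv_Csq_one {L L' : ZMod 5 → ZMod 5 → ZMod 5} (hL : IsLatinSquare L)
    (hL' : IsLatinSquare L') (h : IsOrthogonal L L') :
    ∃ m, m ≠ 0 ∧ m ≠ 1 ∧ PairEquiv (L, L') (Csq 5 1, Csq 5 m) := by
  obtain ⟨a, b, c, habc⟩ := latinEquiv_Csq_one hL (hL.not_hasIntercalate hL' h (by simp))
  have hiso : isotope a b c L = Csq 5 1 := by
    funext i j
    exact (habc i j).symm
  set c' := (b.trans (hL'.row (a 0))).symm
  have hM' := hL'.isotope a b c'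
  have horth := hiso ▸ h.isotope a b c c'
  obtain ⟨m, hm⟩ := eq_Csq_of_isOrthogonal hM' horth
    (b.trans (hL'.row (a 0))).symm_apply_apply
  rw [hm] at hM' horth
  refine ⟨m, ?_, ?_, ?_⟩
  · rintro rfl
    exact zero_ne_one <| (hM'.2 0).1 (by simp [Csq] : Csq 5 0 0 0 = Csq 5 0 1 0)
  · rintro rfl
    have : ((0, 1) : ZMod 5 × ZMod 5) = (1, 0) := horth.1 (by simp [Csq])
    simp at this
  · rw [← hiso, ← hm]
    exact pairEquiv_isotope L L' a b c c'

theorem pairEquiv_Csq_four_or_three {L L' : ZMod 5 → ZMod 5 → ZMod 5} (hL : IsLatinSquare L)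
    (hL' : IsLatinSquare L') (h : IsOrthogonal L L') :
    PairEquiv (L, L') (Csq 5 1, Csq 5 4) ∨ PairEquiv (L, L') (Csq 5 1, Csq 5 3) := by
  obtain ⟨m, hm₀, hm₁, hm⟩ := pairEquiv_Csq_one hL hL' h
  have hcases : ∀ m : ZMod 5, m ≠ 0 → m ≠ 1 → m = 2 ∨ m = 3 ∨ m = 4 := by decide
  obtain rfl | rfl | rfl := hcases m hm₀ hm₁
  · exact .inr (hm.trans (pairEquiv_Csq_inv _ ⟨2, 3, rfl, rfl⟩))
  · exact .inr hm
  · exact .inl hm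

/-- The orthogonal pair `(C_1, C_m)` of order `5`. -/
def cyclicPair (m : ZMod 5) (hm₀ : m ≠ 0) (hm₁ : m ≠ 1) : OLSPair 5 :=
  ⟨(Csq 5 1, Csq 5 m), isLatinSquare_Csq (k := 5) isUnit_one,
    isLatinSquare_Csq (k := 5) hm₀.isUnit,
    isOrthogonal_Csq (k := 5) (sub_ne_zero.2 hm₁.symm).isUnit⟩

theorem cyclicPair_surjective : Function.Surjective
    ![Quotient.mk (olsSetoid 5) (cyclicPair 4 (by decide) (by decide)),
      Quotient.mk (olsSetoid 5) (cyclicPair 3 (by decide) (by decide))] := by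
  rintro ⟨P⟩
  obtain h | h := pairEquiv_Csq_four_or_three P.2.1 P.2.2.1 P.2.2.2
  · exact ⟨0, Quotient.sound (s := olsSetoid 5) (Relation.EqvGen.symm _ _ h)⟩
  · exact ⟨1, Quotient.sound (s := olsSetoid 5) (Relation.EqvGen.symm _ _ h)⟩

end CyclicMate

/-- Every ordered pair of orthogonal Latin squares of order 5 is
`∼'`-equivalent to `(C₁, C₄)` or to `(C₁, C₃)` on `ZMod 5`; since `(C₁, C₄)`
is orthogonal, the set of `∼'`-classes of ordered pairs of orthogonal Latin
squares of order 5 has at least one and at most two elements.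
(`ZMod 5` is identified with `Fin 5`.) -/
theorem ols5_classes :
    (∀ L L' : Fin 5 → Fin 5 → Fin 5,
      IsLatinSquare L → IsLatinSquare L' → IsOrthogonal L L' →
        PairEquiv (L, L') (Csq 5 1, Csq 5 4) ∨ PairEquiv (L, L') (Csq 5 1, Csq 5 3)) ∧
    IsOrthogonal (Csq 5 1) (Csq 5 4) ∧
    1 ≤ Nat.card (Quotient (olsSetoid 5)) ∧
    Nat.card (Quotient (olsSetoid 5)) ≤ 2 := by
  have hfin : Finite (Quotient (olsSetoid 5)) := .of_surjective _ cyclicPair_surjective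
  refine ⟨fun _ _ => pairEquiv_Csq_four_or_three,
    (cyclicPair 4 (by decide) (by decide)).2.2.2, ?_, ?_⟩
  · have : Nonempty (Quotient (olsSetoid 5)) :=
      ⟨Quotient.mk _ (cyclicPair 4 (by decide) (by decide))⟩
    exact Nat.card_pos
  · exact (Nat.card_le_card_of_surjective _ cyclicPair_surjective).trans_eq (Nat.card_fin 2)
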